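/- arXiv:2002.12452 — 4 statements merged into one kernel-verified Lean document; each statement's English description precedes it below -/
import Mathlib

section
/- An infinite modular ortholattice of finite dimension does not admit a finite universal test set. -/
/-- An ortholattice: a bounded lattice with an order-reversing involution `x ↦ x′`
satisfying `x ⊓ x′ = ⊥` and `x ⊔ x′ = ⊤`. -/
class Ortholattice (α : Type*) extends Lattice α, BoundedOrder α where
  compl : α → α
  compl_antitone : ∀ x y : α, x ≤ y → compl y ≤ compl x
  compl_compl : ∀ x : α, compl (compl x) = x
  inf_compl : ∀ x : α, x ⊓ compl x = ⊥
  sup_compl : ∀ x : α, x ⊔ compl x = ⊤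

postfix:max "′" => Ortholattice.compl

/-- Ortholattice terms in the operations ∧, ∨, ', 0, 1 with variables indexed by ℕ. -/
inductive OLTerm : Type
  | var : ℕ → OLTerm
  | zero : OLTerm
  | one : OLTerm
  | inf : OLTerm → OLTerm → OLTerm
  | sup : OLTerm → OLTerm → OLTerm
  | compl : OLTerm → OLTerm

/-- Evaluation of an ortholattice term under a substitution `v`. -/
def OLTerm.eval {α : Type*} [Ortholattice α] (v : ℕ → α) : OLTerm → α
  | var i => v i
  | zero => ⊥
  | one => ⊤
  | inf t s => t.eval v ⊓ s.eval v
  | sup t s => t.eval v ⊔ s.eval v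
  | compl t => (t.eval v)′

/-- A term is a tautology of an ortholattice if it evaluates to ⊤ under every substitution. -/
def IsTautology (α : Type*) [Ortholattice α] (t : OLTerm) : Prop :=
  ∀ v : ℕ → α, t.eval v = ⊤

/-- A universal test set: every term evaluating to ⊤ under all substitutions from `T`
is a tautology. -/
def IsUniversalTestSet (α : Type*) [Ortholattice α] (T : Set α) : Prop :=
  ∀ t : OLTerm, (∀ v : ℕ → α, (∀ i, v i ∈ T) → t.eval v = ⊤) → IsTautology α t

/-- A lattice has finite dimension `d` if some maximal chain has exactly `d + 1` elements. -/
def HasDim (α : Type*) [Lattice α] (d : ℕ) : Prop :=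
  ∃ s : Set α, IsMaxChain (· ≤ ·) s ∧ s.ncard = d + 1

namespace MOLAux

section
variable {α : Type*} [Ortholattice α]

lemma cvar_antitone {x y : α} (h : x ≤ y) : y′ ≤ x′ := Ortholattice.compl_antitone x y h

lemma le_cc {x y : α} (h : x ≤ y′) : y ≤ x′ := by
  have := cvar_antitone h
  rwa [Ortholattice.compl_compl] at this

lemma inf_c (x : α) : x ⊓ x′ = ⊥ := Ortholattice.inf_compl x
lemma sup_c (x : α) : x ⊔ x′ = ⊤ := Ortholattice.sup_compl x

lemma bot_c : (⊥ : α)′ = ⊤ := by simpa using sup_c (⊥ : α)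
lemma top_c : (⊤ : α)′ = ⊥ := by simpa using inf_c (⊤ : α)

lemma eq_bot_of_le_c {x : α} (h : x ≤ x′) : x = ⊥ := by
  have := inf_c x
  rwa [inf_eq_left.2 h] at this

lemma sup_c_eq_top {x y : α} (h : x ⊓ y = ⊥) : x′ ⊔ y′ = ⊤ := by
  have h1 : (x′ ⊔ y′)′ ≤ x ⊓ y := by
    refine le_inf ?_ ?_
    · have := cvar_antitone (le_sup_left : x′ ≤ x′ ⊔ y′)
      rwa [Ortholattice.compl_compl] at this
    · have := cvar_antitone (le_sup_right : y′ ≤ x′ ⊔ y′)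
      rwa [Ortholattice.compl_compl] at this
  rw [h, le_bot_iff] at h1
  rw [← Ortholattice.compl_compl (x′ ⊔ y′), h1, bot_c]

end

lemma wf {α : Type*} [Lattice α] [BoundedOrder α] [IsModularLattice α]
    (d : ℕ) (hdim : HasDim α d) : WellFoundedLT α := by
  obtain ⟨s, hs, hc⟩ := hdim
  have hfin : s.Finite := Set.finite_of_ncard_ne_zero (by omega)
  have hbot : (⊥ : α) ∈ s := hs.bot_mem
  have hfin2 : {K | K ∈ s ∧ WellFoundedLT (Set.Iic K)}.Finite := hfin.subset (fun x hx => hx.1)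
  have hne : {K | K ∈ s ∧ WellFoundedLT (Set.Iic K)}.Nonempty := by
    refine ⟨⊥, hbot, ?_⟩
    haveI : Finite (Set.Iic (⊥ : α)) := by
      rw [Set.Iic_bot]; infer_instance
    infer_instance
  obtain ⟨K, hK⟩ := hfin2.exists_maximal hne
  obtain ⟨hKs, hKw⟩ := hK.prop
  by_cases hKt : K = ⊤
  · subst hKt
    exact StrictMono.wellFoundedLT (f := fun x : α => (⟨x, le_top⟩ : Set.Iic (⊤ : α))) (fun a b h => h)
  exfalso
  have hne2 : {x | x ∈ s ∧ K < x}.Nonempty := ⟨⊤, hs.top_mem, lt_top_iff_ne_top.2 hKt⟩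
  obtain ⟨b, hb⟩ := (hfin.subset (fun x hx => hx.1 : {x | x ∈ s ∧ K < x} ⊆ s)).exists_minimal hne2
  obtain ⟨hbs, hKb⟩ := hb.prop
  have hcov : ∀ z, K ≤ z → z ≤ b → z = K ∨ z = b := by
    intro z h1 h2
    by_contra hcon
    push Not at hcon
    have hlt1 : K < z := lt_of_le_of_ne h1 (Ne.symm hcon.1)
    have hlt2 : z < b := lt_of_le_of_ne h2 hcon.2
    have hz : z ∈ s := by
      have hch : IsChain (· ≤ ·) (insert z s) := by
        refine hs.1.insert ?_
        intro y hy _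
        rcases hs.1.total hy hKs with h | h
        · exact Or.inr (h.trans h1)
        · by_cases hyk : K = y
          · exact Or.inr (hyk ▸ h1)
          have hy2 : K < y := lt_of_le_of_ne h hyk
          rcases hs.1.total hy hbs with h' | h'
          · exact Or.inl (h2.trans (hb.le_of_le ⟨hy, hy2⟩ h'))
          · exact Or.inl (h2.trans h')
      have := hs.2 hch (Set.subset_insert z s)
      rw [this]; exact Set.mem_insert z s
    exact absurd (hb.le_of_le ⟨hz, hlt1⟩ h2) (not_le_of_gt hlt2)
  have hw : WellFoundedLT (Set.Iic b) := by
    haveI : Finite (Set.Icc K b) := by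
      refine Set.Finite.subset (s := {K, b}) (by simp) ?_
      intro z hz
      exact hcov z hz.1 hz.2
    refine StrictMono.wellFoundedLT (β := Set.Iic K × Set.Icc K b)
      (f := fun x : Set.Iic b => ((⟨x.1 ⊓ K, inf_le_right⟩ : Set.Iic K),
        (⟨x.1 ⊔ K, le_sup_right, sup_le x.2 hKb.le⟩ : Set.Icc K b))) ?_
    intro x y hxy
    have := strictMono_inf_prod_sup (z := K) (show x.1 < y.1 from hxy)
    exact this
  exact absurd (hK.le_of_ge ⟨hbs, hw⟩ hKb.le) (not_le_of_gt hKb)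

section
variable {α : Type*} [Ortholattice α] [IsModularLattice α]

lemma infinite_atoms [Infinite α] [WellFoundedLT α] : {a : α | IsAtom a}.Infinite := by
  intro hfin
  haveI : IsAtomic α := isAtomic_of_orderBot_wellFounded_lt wellFounded_lt
  have key : ∀ x y : α, (∀ a, IsAtom a → a ≤ x → a ≤ y) → x ≤ y := by
    intro x y h
    rcases eq_bot_or_exists_atom_le (x ⊓ (x ⊓ y)′) with h0 | ⟨a, ha, hle⟩
    · have h1 : ((x ⊓ y) ⊔ (x ⊓ y)′) ⊓ x = (x ⊓ y) ⊔ ((x ⊓ y)′ ⊓ x) :=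
        sup_inf_assoc_of_le _ inf_le_left
      rw [sup_c, inf_comm ((x ⊓ y)′) x, h0, top_inf_eq, sup_bot_eq] at h1
      rw [h1]; exact inf_le_right
    · exfalso
      have hx : a ≤ x := hle.trans inf_le_left
      have h2 : a ≤ x ⊓ y := le_inf hx (h a ha hx)
      have h3 : a ≤ (x ⊓ y) ⊓ (x ⊓ y)′ := le_inf h2 (hle.trans inf_le_right)
      rw [inf_c, le_bot_iff] at h3
      exact ha.1 h3
  haveI : Finite {a : α | IsAtom a} := hfin
  have hinj : Function.Injective (fun x : α => {a : {a : α | IsAtom a} | a.1 ≤ x}) := by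
    intro x y h
    have h' : ∀ a, IsAtom a → (a ≤ x ↔ a ≤ y) := fun a ha => by
      have := Set.ext_iff.1 h ⟨a, ha⟩
      exact this
    exact le_antisymm (key _ _ fun a ha => (h' a ha).1) (key _ _ fun a ha => (h' a ha).2)
  exact (Finite.of_injective _ hinj).false

lemma atom_covBy {a b : α} (hb : IsAtom b) (h : ¬ b ≤ a) : a ⋖ a ⊔ b := by
  have h1 : a ⊓ b = ⊥ := by
    rcases hb.le_iff.1 (inf_le_right : a ⊓ b ≤ b) with h1 | h1
    · exact h1
    · exact absurd (inf_eq_right.1 h1) h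
  apply covBy_sup_of_inf_covBy_right
  rw [h1]; exact hb.bot_covBy

lemma exists_line [Infinite α] [WellFoundedLT α] :
    ∃ a q : α, IsAtom a ∧ IsAtom q ∧ ¬ q ≤ a ∧ {b : α | IsAtom b ∧ b ≤ a ⊔ q}.Infinite := by
  have hne : {u : α | {b : α | IsAtom b ∧ b ≤ u}.Infinite}.Nonempty :=
    ⟨⊤, by simpa using infinite_atoms (α := α)⟩
  obtain ⟨u, hu, hmin⟩ := WellFounded.has_min (wellFounded_lt (α := α)) _ hne
  obtain ⟨a, ha, hau⟩ := Set.Infinite.nonempty hu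
  have hpu : u ⊓ a′ < u := by
    refine lt_of_le_of_ne inf_le_left fun h => ?_
    exact ha.1 (eq_bot_of_le_c (hau.trans (inf_eq_left.1 h)))
  have hfin : {b : α | IsAtom b ∧ b ≤ u ⊓ a′}.Finite := by
    by_contra h
    exact hmin _ h hpu
  have hq : ∀ b, IsAtom b → b ≤ u → b ≠ a →
      IsAtom ((a ⊔ b) ⊓ a′) ∧ (a ⊔ b) ⊓ a′ ≤ u ⊓ a′ ∧ b ≤ a ⊔ ((a ⊔ b) ⊓ a′) := by
    intro b hb hbu hba
    have hnle : ¬ b ≤ a := fun h => hba ((ha.le_iff.1 h).resolve_left hb.1)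
    have hsup : a ⊔ ((a ⊔ b) ⊓ a′) = a ⊔ b := by
      have h1 : (a ⊔ a′) ⊓ (a ⊔ b) = a ⊔ (a′ ⊓ (a ⊔ b)) := sup_inf_assoc_of_le _ le_sup_left
      rw [sup_c, top_inf_eq, inf_comm] at h1
      exact h1.symm
    have hinf : a ⊓ ((a ⊔ b) ⊓ a′) = ⊥ := by
      rw [← le_bot_iff, ← inf_c a]
      exact inf_le_inf_left a inf_le_right
    refine ⟨?_, inf_le_inf_right _ (sup_le hau hbu), ?_⟩
    · rw [← bot_covBy_iff, ← hinf]
      apply inf_covBy_of_covBy_sup_left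
      rw [hsup]
      exact atom_covBy hb hnle
    · rw [hsup]; exact le_sup_right
  have hinf2 : ({b : α | IsAtom b ∧ b ≤ u} \ {a}).Infinite := hu.diff (Set.finite_singleton a)
  obtain ⟨q, hqm, hqi⟩ : ∃ q ∈ {b : α | IsAtom b ∧ b ≤ u ⊓ a′},
      {b : α | IsAtom b ∧ b ≤ a ⊔ q}.Infinite := by
    by_contra hcon
    push Not at hcon
    apply hinf2
    refine (hfin.biUnion (t := fun q => {b : α | IsAtom b ∧ b ≤ a ⊔ q}) ?_).subset ?_
    · intro q hq
      exact hcon q hq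
    · rintro b ⟨⟨hb, hbu⟩, hba⟩
      obtain ⟨h1, h2, h3⟩ := hq b hb hbu hba
      exact Set.mem_biUnion (show _ ∈ {b : α | IsAtom b ∧ b ≤ u ⊓ a′} from ⟨h1, h2⟩) ⟨hb, h3⟩
  refine ⟨a, q, ha, hqm.1, ?_, hqi⟩
  intro h
  have h1 : q = a := (ha.le_iff.1 h).resolve_left hqm.1.1
  exact hqm.1.1 (eq_bot_of_le_c (h1 ▸ hqm.2.trans inf_le_right))

lemma line_sup {a q x y : α} (ha : IsAtom a) (hq : IsAtom q) (hqa : ¬ q ≤ a)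
    (hx : IsAtom x) (hy : IsAtom y) (hxu : x ≤ a ⊔ q) (hyu : y ≤ a ⊔ q) (hxy : x ≠ y) :
    x ⊔ y = a ⊔ q := by
  have hnle : ∀ {b c : α}, IsAtom b → IsAtom c → b ≠ c → ¬ b ≤ c :=
    fun hb hc hbc h => hbc ((hc.le_iff.1 h).resolve_left hb.1)
  have hcov : ∀ {b c : α}, b ⋖ a ⊔ q → IsAtom c → ¬ c ≤ b → c ≤ a ⊔ q → b ⊔ c = a ⊔ q := by
    intro b c hb hc hcb hcu
    have h1 : b < b ⊔ c := by
      refine lt_of_le_of_ne le_sup_left fun h => hcb ?_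
      rw [h]; exact le_sup_right
    exact (hb.eq_or_eq h1.le (sup_le hb.le hcu)).resolve_left h1.ne'
  have hxc : x ⋖ a ⊔ q := by
    by_cases hxa : x = a
    · subst hxa; exact atom_covBy hq hqa
    · have h1 := hcov (atom_covBy hq hqa) hx (hnle hx ha hxa) hxu
      rw [← h1, sup_comm]
      exact atom_covBy ha (hnle ha hx (Ne.symm hxa))
  exact hcov hxc hy (hnle hy hx (Ne.symm hxy)) hyu

lemma exists_seq [Infinite α] [WellFoundedLT α] :
    ∃ (u : α) (f : ℕ → α), u ≠ ⊥ ∧ (∀ n, IsAtom (f n)) ∧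
      ∀ m n, m < n → f m ⊔ f n = u ∧ f m ≠ f n ∧ ¬ f n ≤ (f m)′ := by
  obtain ⟨a, q, ha, hq, hqa, hinf⟩ := exists_line (α := α)
  obtain ⟨f, hf, hr⟩ := exists_seq_of_forall_finset_exists
    (fun b : α => IsAtom b ∧ b ≤ a ⊔ q) (fun x y => x ≠ y ∧ ¬ y ≤ x′) (by
      intro s hs
      have hbad : ((s : Set α) ∪ ⋃ x ∈ (s : Set α),
          {y | (IsAtom y ∧ y ≤ a ⊔ q) ∧ y ≤ x′}).Finite := by
        refine s.finite_toSet.union (s.finite_toSet.biUnion fun x hx => ?_)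
        apply Set.Subsingleton.finite
        rintro y ⟨hy, hyx⟩ z ⟨hz, hzx⟩
        by_contra hyz
        have hx' := hs x hx
        have h1 := line_sup ha hq hqa hy.1 hz.1 hy.2 hz.2 hyz
        have h2 : x ≤ x′ := hx'.2.trans (h1 ▸ sup_le hyx hzx)
        exact hx'.1.1 (eq_bot_of_le_c h2)
      obtain ⟨y, hy, hyn⟩ := (hinf.diff hbad).nonempty
      refine ⟨y, hy, fun x hx => ⟨?_, fun h => ?_⟩⟩
      · rintro rfl
        exact hyn (Or.inl hx)
      · exact hyn (Or.inr (Set.mem_biUnion (show x ∈ (s : Set α) from hx) ⟨hy, h⟩)))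
  refine ⟨a ⊔ q, f, ?_, fun n => (hf n).1, fun m n h => ⟨?_, hr m n h⟩⟩
  · intro h
    exact ha.1 (le_bot_iff.1 (h ▸ le_sup_left))
  · exact line_sup ha hq hqa (hf m).1 (hf n).1 (hf m).2 (hf n).2 (hr m n h).1

/-- y an atom, x not orthogonal to y: x ⊔ y′ = ⊤. -/
lemma nonorth {x y : α} (hy : IsAtom y) (hx : ¬ x ≤ y′) : x ⊔ y′ = ⊤ := by
  have h1 : (x ⊔ y′)′ ≤ y := by
    have := cvar_antitone (le_sup_right : y′ ≤ x ⊔ y′)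
    rwa [Ortholattice.compl_compl] at this
  rcases hy.le_iff.1 h1 with h | h
  · rw [← Ortholattice.compl_compl (x ⊔ y′), h, bot_c]
  · exfalso
    apply hx
    have h2 := congrArg Ortholattice.compl h
    rw [Ortholattice.compl_compl] at h2
    rw [← h2]; exact le_sup_left

/-- Commutator term. -/
def comm (s t : OLTerm) : OLTerm :=
  .inf (.inf (.sup s t) (.sup s (.compl t))) (.inf (.sup (.compl s) t) (.sup (.compl s) (.compl t)))

/-- Finite meet. -/
def meet (l : List OLTerm) : OLTerm := l.foldr .inf .one

lemma meet_le (v : ℕ → α) (l : List OLTerm) (t : OLTerm) (h : t ∈ l) :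
    (meet l).eval v ≤ t.eval v := by
  induction l with
  | nil => simp at h
  | cons s l ih =>
    rcases List.mem_cons.1 h with rfl | h
    · exact inf_le_left
    · exact inf_le_right.trans (ih h)

lemma le_meet (v : ℕ → α) (u : α) (l : List OLTerm) (h : ∀ t ∈ l, u ≤ t.eval v) :
    u ≤ (meet l).eval v := by
  induction l with
  | nil => exact le_top
  | cons s l ih =>
    exact le_inf (h s (by simp)) (ih fun t ht => h t (by simp [ht]))

lemma comm_self (v : ℕ → α) (i j : ℕ) (h : v i = v j) :
    (comm (.var i) (.var j)).eval v = ⊥ := by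
  rw [← le_bot_iff, ← inf_c (v j)]
  refine le_inf (inf_le_left.trans (inf_le_left.trans ?_)) (inf_le_right.trans (inf_le_right.trans ?_))
  · simp [OLTerm.eval, h]
  · simp [OLTerm.eval, h]

end

end MOLAux

/-- An infinite modular ortholattice of finite dimension does not admit a finite
universal test set. -/
theorem stmt0 (α : Type*) [Ortholattice α] [IsModularLattice α] [Infinite α]
    (d : ℕ) (hdim : HasDim α d) :
    ¬ ∃ T : Set α, T.Finite ∧ IsUniversalTestSet α T := by
  rintro ⟨T, hT, hU⟩
  haveI : WellFoundedLT α := MOLAux.wf d hdim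
  obtain ⟨u, f, hu, hat, hf⟩ := MOLAux.exists_seq (α := α)
  obtain ⟨n, hn⟩ : ∃ n, n = hT.toFinset.card := ⟨_, rfl⟩
  let P : Finset (ℕ × ℕ) := (Finset.range (n + 1) ×ˢ Finset.range (n + 1)).filter fun p => p.1 < p.2
  let l : List OLTerm := P.toList.map fun p => MOLAux.comm (.var p.1) (.var p.2)
  have h1 := hU (.compl (MOLAux.meet l)) (by
    intro v hv
    obtain ⟨i, hi, j, hj, hij, hvij⟩ : ∃ i ∈ Finset.range (n + 1), ∃ j ∈ Finset.range (n + 1),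
        i ≠ j ∧ v i = v j := by
      apply Finset.exists_ne_map_eq_of_card_lt_of_maps_to (t := hT.toFinset)
      · simp [hn]
      · intro i _
        simpa using hv i
    have hex : ∃ p ∈ P, v p.1 = v p.2 := by
      rcases lt_or_gt_of_ne hij with h | h
      · exact ⟨(i, j), Finset.mem_filter.2 ⟨Finset.mem_product.2 ⟨hi, hj⟩, h⟩, hvij⟩
      · exact ⟨(j, i), Finset.mem_filter.2 ⟨Finset.mem_product.2 ⟨hj, hi⟩, h⟩, hvij.symm⟩
    obtain ⟨p, hp, hpe⟩ := hex
    have hm := MOLAux.meet_le v l (MOLAux.comm (.var p.1) (.var p.2))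
      (List.mem_map.2 ⟨p, Finset.mem_toList.2 hp, rfl⟩)
    rw [MOLAux.comm_self v _ _ hpe, le_bot_iff] at hm
    change ((MOLAux.meet l).eval v)′ = ⊤
    rw [hm, MOLAux.bot_c])
  have h2 : ((MOLAux.meet l).eval f)′ = ⊤ := h1 f
  have h3 : u ≤ (MOLAux.meet l).eval f := by
    apply MOLAux.le_meet
    intro t ht
    obtain ⟨p, hp, rfl⟩ := List.mem_map.1 ht
    have hlt : p.1 < p.2 := (Finset.mem_filter.1 (Finset.mem_toList.1 hp)).2
    obtain ⟨e1, e2, e3⟩ := hf _ _ hlt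
    have e4 : f p.1 ⊔ (f p.2)′ = ⊤ :=
      MOLAux.nonorth (hat _) fun h => e3 (MOLAux.le_cc h)
    have e5 : (f p.1)′ ⊔ f p.2 = ⊤ := by
      rw [sup_comm]; exact MOLAux.nonorth (hat _) e3
    have e6 : (f p.1)′ ⊔ (f p.2)′ = ⊤ := by
      apply MOLAux.sup_c_eq_top
      exact ((hat p.1).disjoint_of_ne (hat p.2) e2).eq_bot
    change u ≤ ((f p.1 ⊔ f p.2) ⊓ (f p.1 ⊔ (f p.2)′)) ⊓ (((f p.1)′ ⊔ f p.2) ⊓ ((f p.1)′ ⊔ (f p.2)′))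
    rw [e4, e5, e6, e1]
    simp
  have h4 : (MOLAux.meet l).eval f = ⊥ := by
    rw [← Ortholattice.compl_compl ((MOLAux.meet l).eval f), h2, MOLAux.top_c]
  exact hu (le_bot_iff.1 (h4 ▸ h3))
end

section
/- For every finite-dimensional real or complex inner product space H with dim H ≥ 2, the ortholattice of all linear subspaces of H (ordered by inclusion, with meet = intersection, join = sum, and orthogonal complement as orthocomplementation) does not admit a finite universal test set. -/
/-- Evaluation of an ortholattice term in the ortholattice of all linear subspaces of an
inner product space: meet = intersection, join = sum, ' = orthogonal complement,
0 = zero subspace, 1 = whole space. -/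
noncomputable def OLTerm.evalSub {𝕜 : Type*} [RCLike 𝕜] {H : Type*} [NormedAddCommGroup H]
    [InnerProductSpace 𝕜 H] (v : ℕ → Submodule 𝕜 H) : OLTerm → Submodule 𝕜 H
  | var i => v i
  | zero => ⊥
  | one => ⊤
  | inf t s => t.evalSub v ⊓ s.evalSub v
  | sup t s => t.evalSub v ⊔ s.evalSub v
  | compl t => (t.evalSub v)ᗮ


namespace OLTerm

/-- the commutator term -/
def comm (i j : ℕ) : OLTerm :=
  inf (inf (sup (var i) (var j)) (sup (var i) (compl (var j))))
    (inf (sup (compl (var i)) (var j)) (sup (compl (var i)) (compl (var j))))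

/-- meet of all commutators along a list of pairs -/
def bigComm : List (ℕ × ℕ) → OLTerm
  | [] => one
  | p :: l => inf (comm p.1 p.2) (bigComm l)

theorem mem_bigComm {𝕜 : Type*} [RCLike 𝕜] {H : Type*} [NormedAddCommGroup H]
    [InnerProductSpace 𝕜 H] (v : ℕ → Submodule 𝕜 H) (x : H) (l : List (ℕ × ℕ)) :
    x ∈ (bigComm l).evalSub v ↔ ∀ p ∈ l, x ∈ (comm p.1 p.2).evalSub v := by
  induction l with
  | nil => simp [bigComm, evalSub]
  | cons p l ih =>
    rw [bigComm, evalSub, Submodule.mem_inf, ih]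
    simp

theorem comm_eq_bot {𝕜 : Type*} [RCLike 𝕜] {H : Type*} [NormedAddCommGroup H]
    [InnerProductSpace 𝕜 H] (v : ℕ → Submodule 𝕜 H) (i j : ℕ) (h : v i = v j) :
    (comm i j).evalSub v = ⊥ := by
  simp only [comm, evalSub, h, sup_idem]
  rw [eq_bot_iff, ← Submodule.inf_orthogonal_eq_bot (v j)]
  exact le_inf (inf_le_left.trans inf_le_left) (inf_le_right.trans inf_le_right)

theorem mem_comm {𝕜 : Type*} [RCLike 𝕜] {H : Type*} [NormedAddCommGroup H]
    [InnerProductSpace 𝕜 H] (e f : H) (he : inner 𝕜 e e = 1) (hf : inner 𝕜 f f = 1)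
    (hef : inner 𝕜 e f = 0) (hfe : inner 𝕜 f e = 0) (i j : ℕ) (hij : i ≠ j) :
    e ∈ (comm i j).evalSub (fun k : ℕ => Submodule.span 𝕜 {e + ((k : 𝕜) + 1) • f}) := by
  have hi : (i : 𝕜) + 1 ≠ 0 := Nat.cast_add_one_ne_zero i
  have hj : (j : 𝕜) + 1 ≠ 0 := Nat.cast_add_one_ne_zero j
  have hd : (i : 𝕜) - j ≠ 0 := sub_ne_zero.mpr (by exact_mod_cast hij)
  have hs : (1 : 𝕜) + (i + 1) * (j + 1) ≠ 0 := by
    have : (1 + (i + 1) * (j + 1) : ℕ) ≠ 0 := by omega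
    exact_mod_cast this
  have key : ∀ (k : ℕ) (a b : 𝕜), a + (k + 1) * b = 0 →
      a • e + b • f ∈ (Submodule.span 𝕜 {e + ((k : 𝕜) + 1) • f})ᗮ := by
    intro k a b h
    rw [Submodule.mem_orthogonal_singleton_iff_inner_right]
    simp only [inner_add_left, inner_add_right, inner_smul_left, inner_smul_right, he, hf, hef,
      hfe, map_add, map_one, map_natCast]
    linear_combination h
  have line : ∀ (k : ℕ) (a b : 𝕜), b = (k + 1) * a →
      a • e + b • f ∈ Submodule.span 𝕜 {e + ((k : 𝕜) + 1) • f} := by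
    intro k a b h
    rw [Submodule.mem_span_singleton]
    refine ⟨a, ?_⟩
    rw [h]
    module
  have split : ∀ (A B : Submodule 𝕜 H) (a b : 𝕜), a • e + b • f ∈ A →
      (1 - a) • e + (-b) • f ∈ B → e ∈ A ⊔ B := by
    intro A B a b h1 h2
    rw [Submodule.mem_sup]
    exact ⟨_, h1, _, h2, by module⟩
  simp only [comm, evalSub, Submodule.mem_inf]
  refine ⟨⟨?_, ?_⟩, ?_, ?_⟩
  · apply split _ _ (-((j + 1) / (i - j))) (-((i + 1) * ((j + 1) / (i - j))))
    · apply line; ring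
    · apply line; field_simp; ring
  · apply split _ _ (1 / (1 + (i + 1) * (j + 1))) ((i + 1) * (1 / (1 + (i + 1) * (j + 1))))
    · apply line; ring
    · apply key; field_simp; ring
  · rw [sup_comm]
    apply split _ _ (1 / (1 + (i + 1) * (j + 1))) ((j + 1) * (1 / (1 + (i + 1) * (j + 1))))
    · apply line; ring
    · apply key; field_simp; ring
  · apply split _ _ ((i + 1) / (i - j)) (-(1 / (i - j)))
    · apply key; field_simp; ring
    · apply key; field_simp; ring

end OLTerm

/-- For every finite dimensional real or complex inner product space `H` with `dim H ≥ 2`,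
the ortholattice of all linear subspaces of `H` does not admit a finite universal test set. -/
theorem stmt1 (𝕜 : Type*) [RCLike 𝕜] (H : Type*) [NormedAddCommGroup H]
    [InnerProductSpace 𝕜 H] [FiniteDimensional 𝕜 H] (hdim : 2 ≤ Module.finrank 𝕜 H) :
    ¬ ∃ T : Set (Submodule 𝕜 H), T.Finite ∧
      ∀ t : OLTerm, (∀ v : ℕ → Submodule 𝕜 H, (∀ i, v i ∈ T) → t.evalSub v = ⊤) →
        ∀ v : ℕ → Submodule 𝕜 H, t.evalSub v = ⊤ := by
  rintro ⟨T, hT, h⟩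
  let N := hT.toFinset.card + 1
  let l := ((List.range N).product (List.range N)).filter (fun p => p.1 ≠ p.2)
  have hl : ∀ p : ℕ × ℕ, p ∈ l ↔ (p.1 < N ∧ p.2 < N) ∧ p.1 ≠ p.2 := by
    rintro ⟨a, b⟩
    simp [l, List.mem_filter, List.pair_mem_product]
  have h1 := h (OLTerm.compl (OLTerm.bigComm l)) (by
    intro v hv
    obtain ⟨i, hi, j, hj, hij, hvv⟩ :=
      Finset.exists_ne_map_eq_of_card_lt_of_maps_to (s := Finset.range N) (t := hT.toFinset)
        (f := v) (by simp [N]) (by intro k _; simpa using hv k)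
    have hbot : (OLTerm.bigComm l).evalSub v = ⊥ := by
      rw [eq_bot_iff]
      intro x hx
      rw [OLTerm.mem_bigComm] at hx
      have := hx (i, j) ((hl _).2 ⟨⟨Finset.mem_range.1 hi, Finset.mem_range.1 hj⟩, hij⟩)
      rwa [OLTerm.comm_eq_bot v i j hvv] at this
    rw [OLTerm.evalSub, hbot, Submodule.bot_orthogonal_eq_top])
  let b := stdOrthonormalBasis 𝕜 H
  have hb := orthonormal_iff_ite.1 b.orthonormal
  let p : Fin (Module.finrank 𝕜 H) := ⟨0, by omega⟩
  let q : Fin (Module.finrank 𝕜 H) := ⟨1, by omega⟩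
  have hpq : p ≠ q := by simp [p, q]
  have he : inner 𝕜 (b p) (b p) = 1 := by simpa using hb p p
  have hf : inner 𝕜 (b q) (b q) = 1 := by simpa using hb q q
  have hef : inner 𝕜 (b p) (b q) = 0 := by rw [hb, if_neg hpq]
  have hfe : inner 𝕜 (b q) (b p) = 0 := by rw [hb, if_neg hpq.symm]
  have h2 := h1 (fun k : ℕ => Submodule.span 𝕜 {b p + ((k : 𝕜) + 1) • b q})
  have h3 := (OLTerm.mem_bigComm _ (b p) l).2
    (fun r hr => OLTerm.mem_comm (b p) (b q) he hf hef hfe r.1 r.2 ((hl r).1 hr).2)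
  rw [OLTerm.evalSub] at h2
  have h4 : b p ∈ (⊤ : Submodule 𝕜 H) := trivial
  rw [← h2] at h4
  have h5 := Submodule.inner_right_of_mem_orthogonal h3 h4
  rw [he] at h5
  exact one_ne_zero h5
end

section
/- Let 𝕜 be ℝ or ℂ (with standard inner product) and let m ≤ N be positive integers. Every ortholattice tautology of the ortholattice L(𝕜^N) of all linear subspaces of 𝕜^N (with orthogonal complement) is a tautology of L(𝕜^m). -/
theorem OLTerm.evalSub_transfer {𝕜 : Type*} [RCLike 𝕜] {E H : Type*} [NormedAddCommGroup E]
    [InnerProductSpace 𝕜 E] [NormedAddCommGroup H] [InnerProductSpace 𝕜 H]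
    (f : E →ₗ[𝕜] H) (p : H →ₗ[𝕜] E) (hpf : ∀ u, p (f u) = u)
    (hadj : ∀ u x, inner 𝕜 (f u) x = inner 𝕜 u (p x))
    (v : ℕ → Submodule 𝕜 E) (t : OLTerm) :
    ∃ b : Prop, ∀ x, x ∈ t.evalSub (fun i => (v i).map f) ↔
      (p x ∈ t.evalSub v ∧ (b ∨ f (p x) = x)) := by
  have hadj' : ∀ x u, inner 𝕜 x (f u) = inner 𝕜 (p x) u := by
    intro x u
    rw [← inner_conj_symm, hadj, inner_conj_symm]
  induction t with
  | var i =>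
    refine ⟨False, fun x => ?_⟩
    simp only [OLTerm.evalSub, Submodule.mem_map, false_or]
    constructor
    · rintro ⟨u, hu, rfl⟩
      rw [hpf]
      exact ⟨hu, rfl⟩
    · rintro ⟨h1, h2⟩
      exact ⟨_, h1, h2⟩
  | zero =>
    refine ⟨False, fun x => ?_⟩
    simp only [OLTerm.evalSub, Submodule.mem_bot, false_or]
    constructor
    · rintro rfl
      simp
    · rintro ⟨h1, h2⟩
      rw [← h2, h1, map_zero]
  | one =>
    refine ⟨True, fun x => ?_⟩
    simp [OLTerm.evalSub]
  | inf t s iht ihs =>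
    obtain ⟨b, hb⟩ := iht
    obtain ⟨c, hc⟩ := ihs
    refine ⟨b ∧ c, fun x => ?_⟩
    simp only [OLTerm.evalSub, Submodule.mem_inf, hb, hc]
    tauto
  | sup t s iht ihs =>
    obtain ⟨b, hb⟩ := iht
    obtain ⟨c, hc⟩ := ihs
    refine ⟨b ∨ c, fun x => ?_⟩
    simp only [OLTerm.evalSub, Submodule.mem_sup]
    constructor
    · rintro ⟨y, hy, z, hz, rfl⟩
      rw [hb] at hy
      rw [hc] at hz
      refine ⟨⟨p y, hy.1, p z, hz.1, (map_add p y z).symm⟩, ?_⟩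
      rcases hy.2 with h | h
      · exact Or.inl (Or.inl h)
      rcases hz.2 with h' | h'
      · exact Or.inl (Or.inr h')
      · right
        rw [map_add, map_add, h, h']
    · rintro ⟨⟨y, hy, z, hz, hyz⟩, h⟩
      have e1 : p (x - f z) = y := by rw [map_sub, hpf, ← hyz, add_sub_cancel_right]
      have e2 : p (x - f y) = z := by rw [map_sub, hpf, ← hyz, add_sub_cancel_left]
      rcases h with (h | h) | h
      · exact ⟨x - f z, (hb _).2 ⟨by rwa [e1], Or.inl h⟩, f z,
          (hc _).2 ⟨by rwa [hpf], Or.inr (by rw [hpf])⟩, by abel⟩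
      · exact ⟨f y, (hb _).2 ⟨by rwa [hpf], Or.inr (by rw [hpf])⟩, x - f y,
          (hc _).2 ⟨by rwa [e2], Or.inl h⟩, by abel⟩
      · exact ⟨f y, (hb _).2 ⟨by rwa [hpf], Or.inr (by rw [hpf])⟩, f z,
          (hc _).2 ⟨by rwa [hpf], Or.inr (by rw [hpf])⟩, by rw [← map_add, hyz, h]⟩
  | compl t iht =>
    obtain ⟨b, hb⟩ := iht
    refine ⟨¬ b, fun x => ?_⟩
    simp only [OLTerm.evalSub, Submodule.mem_orthogonal]
    constructor
    · intro h
      refine ⟨fun u hu => ?_, ?_⟩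
      · rw [← hadj]
        exact h _ ((hb _).2 ⟨by rwa [hpf], Or.inr (by rw [hpf])⟩)
      · by_cases hbb : b
        · right
          have e : p (x - f (p x)) = 0 := by rw [map_sub, hpf, sub_self]
          have h1 := h (x - f (p x)) ((hb _).2 ⟨by rw [e]; exact zero_mem _, Or.inl hbb⟩)
          have h2 : inner 𝕜 (x - f (p x)) (x - f (p x)) = 0 := by
            rw [inner_sub_right, h1, hadj', e, inner_zero_left, sub_zero]
          exact (sub_eq_zero.1 (inner_self_eq_zero.1 h2)).symm
        · exact Or.inl hbb
    · rintro ⟨h1, h2⟩ y hy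
      obtain ⟨hy1, hy2⟩ := (hb y).1 hy
      have h3 := h1 _ hy1
      by_cases hx : f (p x) = x
      · rw [← hx, hadj', h3]
      · have hyy : f (p y) = y := by tauto
        rw [← hyy, hadj, h3]

/-- Let `𝕜` be `ℝ` or `ℂ` and `m ≤ N` positive integers.  Every ortholattice tautology of
the subspace ortholattice `L(𝕜^N)` is a tautology of `L(𝕜^m)`. -/
theorem stmt13 (𝕜 : Type*) [RCLike 𝕜] (m N : ℕ) (hm : 0 < m) (hmN : m ≤ N) (t : OLTerm)
    (htaut : ∀ v : ℕ → Submodule 𝕜 (EuclideanSpace 𝕜 (Fin N)), t.evalSub v = ⊤) :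
    ∀ v : ℕ → Submodule 𝕜 (EuclideanSpace 𝕜 (Fin m)), t.evalSub v = ⊤ := by
  intro v
  let p : EuclideanSpace 𝕜 (Fin N) →ₗ[𝕜] EuclideanSpace 𝕜 (Fin m) :=
    { toFun := fun x => WithLp.toLp 2 (fun i => x (Fin.castLE hmN i))
      map_add' := fun x y => by ext i; simp
      map_smul' := fun c x => by ext i; simp }
  have hp : ∀ x i, p x i = x (Fin.castLE hmN i) := fun x i => rfl
  let f := LinearMap.adjoint p
  have hadj : ∀ u x, inner 𝕜 (f u) x = inner 𝕜 u (p x) := fun u x =>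
    LinearMap.adjoint_inner_left p x u
  have hps : ∀ i, p (EuclideanSpace.single (Fin.castLE hmN i) 1) = EuclideanSpace.single i 1 := by
    intro i
    ext j
    rw [hp]
    simp
  have hpf : ∀ u, p (f u) = u := by
    intro u
    ext i
    rw [hp]
    have h := LinearMap.adjoint_inner_right p (EuclideanSpace.single (Fin.castLE hmN i) 1) u
    rw [hps] at h
    rw [EuclideanSpace.inner_single_left, EuclideanSpace.inner_single_left] at h
    simpa using h
  obtain ⟨b, hb⟩ := OLTerm.evalSub_transfer f p hpf hadj v t
  rw [eq_top_iff]
  intro u _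
  have h := ((hb (f u)).1 (by rw [htaut]; trivial)).1
  rwa [hpf] at h
end

section
/- Let 𝔽 be the field of real algebraic numbers, viewed as a subfield of ℝ, and let m be a positive integer. An ortholattice term t is a tautology of the ortholattice L(𝔽^m) of all 𝔽-linear subspaces of 𝔽^m (with orthogonal complement for the standard bilinear form) if and only if t is a tautology of the ortholattice L(ℝ^m) of all linear subspaces of ℝ^m (with orthogonal complement for the standard inner product). -/
set_option synthInstance.maxHeartbeats 1000000

/-- The field of real algebraic numbers, viewed as a subfield of `ℝ`
(the relative algebraic closure of `ℚ` in `ℝ`). -/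
noncomputable abbrev RealAlg : Type := algebraicClosure ℚ ℝ

/-- The orthogonal complement of a subspace of `F^m` with respect to the standard
bilinear form `⟨x, y⟩ = ∑ xᵢ yᵢ`. -/
def orthF {F : Type*} [Field F] {m : ℕ} (U : Submodule F (Fin m → F)) :
    Submodule F (Fin m → F) where
  carrier := {y | ∀ x ∈ U, ∑ i, x i * y i = 0}
  add_mem' := by
    intro p q hp hq x hx
    simp only [Pi.add_apply, mul_add, Finset.sum_add_distrib, hp x hx, hq x hx, add_zero]
  zero_mem' := by intro x hx; simp
  smul_mem' := by
    intro c p hp x hx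
    simp only [Pi.smul_apply, smul_eq_mul, mul_left_comm, ← Finset.mul_sum, hp x hx, mul_zero]

/-- Evaluation of an ortholattice term in the ortholattice `L(F^m)` of all linear
subspaces of `F^m`, with ' interpreted as the orthogonal complement for the standard
bilinear form. -/
def OLTerm.evalF {F : Type*} [Field F] {m : ℕ} (v : ℕ → Submodule F (Fin m → F)) :
    OLTerm → Submodule F (Fin m → F)
  | var i => v i
  | zero => ⊥
  | one => ⊤
  | inf t s => t.evalF v ⊓ s.evalF v
  | sup t s => t.evalF v ⊔ s.evalF v
  | compl t => orthF (t.evalF v)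


open Polynomial Filter Topology IntermediateField in
theorem aux_simple_root (f : ℝ[X]) (y : ℝ) (h0 : f.eval y = 0) (h1 : f.derivative.eval y ≠ 0) :
    ∃ a b : ℝ, a ≤ b ∧ f.eval a * f.eval b < 0 := by
  obtain ⟨g, rfl⟩ := dvd_iff_isRoot.mpr h0
  have hg : g.eval y ≠ 0 := by simpa [derivative_mul] using h1
  have hc : Tendsto (fun d : ℝ => g.eval (y - d) * g.eval (y + d)) (𝓝[>] 0) (𝓝 (g.eval y * g.eval y)) := by
    have : Continuous (fun d : ℝ => g.eval (y - d) * g.eval (y + d)) := by fun_prop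
    have h := (this.tendsto 0).mono_left (nhdsWithin_le_nhds (s := Set.Ioi 0))
    simpa using h
  have hpos : 0 < g.eval y * g.eval y := by exact mul_self_pos.mpr hg
  obtain ⟨d, hd, hd0⟩ := ((hc.eventually (lt_mem_nhds hpos)).and self_mem_nhdsWithin).exists
  have hd0 : 0 < d := hd0
  refine ⟨y - d, y + d, by linarith, ?_⟩
  simp only [eval_mul, eval_sub, eval_X, eval_C]
  have : 0 < d * d * (g.eval (y - d) * g.eval (y + d)) := by positivity
  nlinarith

theorem aux_ivt (f : Polynomial ℝ) (a b : ℝ) (hab : a ≤ b) (h : f.eval a * f.eval b < 0) :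
    ∃ y, f.eval y = 0 := by
  have hc : ContinuousOn (fun x => f.eval x) (Set.Icc a b) := f.continuous.continuousOn
  rcases mul_neg_iff.mp h with ⟨h1, h2⟩ | ⟨h1, h2⟩
  · obtain ⟨y, _, hy⟩ := intermediate_value_Icc' hab hc ⟨h2.le, h1.le⟩
    exact ⟨y, hy⟩
  · obtain ⟨y, _, hy⟩ := intermediate_value_Icc hab hc ⟨h1.le, h2.le⟩
    exact ⟨y, hy⟩

abbrev HypF (F : Type) : Type := Filter.Germ ((Filter.hyperfilter ℕ : Ultrafilter ℕ) : Filter ℕ) F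

theorem aux_lift {D E G : Type} [CommRing D] [IsDomain D] [Field E] [Algebra D E]
    [IsFractionRing D E] [Field G] (g : D →+* G) (hg : Function.Injective g) :
    ∃ ψ : E →+* G, ψ.comp (algebraMap D E) = g :=
  ⟨IsFractionRing.lift hg, RingHom.ext fun d => IsFractionRing.lift_algebraMap hg d⟩

open Polynomial Filter Topology IntermediateField in
theorem aux_hom {F : Type} [Field F] [CharZero F] (i : F →+* ℝ)
    (hi : ∀ z, IsAlgebraic ℚ z → ∃ x, i x = z) {D E : Type} [CommRing D] [IsDomain D] [Field E] [Algebra D E] [IsFractionRing D E]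
    [Algebra E ℝ] (ev : ℕ → D →+* ℚ)
    (conv : ∀ d, Tendsto (fun n => ((ev n d : ℚ) : ℝ)) atTop (𝓝 (algebraMap E ℝ (algebraMap D E d))))
    (y : ℝ) (hy : IsIntegral E y) : Nonempty (E⟮y⟯ →+* HypF F) := by
  classical
  have hsimple : ∀ d : D, d ≠ 0 → ∀ᶠ n in atTop, ev n d ≠ 0 := by
    intro d hd
    have h0 : algebraMap E ℝ (algebraMap D E d) ≠ 0 := by
      rw [Ne, map_eq_zero]
      exact fun h => hd ((IsFractionRing.to_map_eq_zero_iff (K := E)).mp h)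
    filter_upwards [(conv d).eventually_ne h0] with n hn
    exact_mod_cast hn
  have hhy : ((hyperfilter ℕ : Ultrafilter ℕ) : Filter ℕ) ≤ atTop := by
    rw [← Nat.cofinite_eq_atTop]; exact hyperfilter_le_cofinite
  let c : (ℕ → F) →+* HypF F := Germ.coeRingHom _
  let evp : D →+* (ℕ → F) := RingHom.pi fun n => (Rat.castHom F).comp (ev n)
  have hinj : Function.Injective (c.comp evp) := by
    rw [injective_iff_map_eq_zero]
    intro d hd
    by_contra hne
    have h1 : ∀ᶠ n in ((hyperfilter ℕ : Ultrafilter ℕ) : Filter ℕ), evp d n = 0 := by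
      have : (((evp d : ℕ → F)) : HypF F) = ((0 : ℕ → F) : HypF F) := hd
      exact Germ.coe_eq.mp this
    obtain ⟨n, h1, h2⟩ := (h1.and (hhy (hsimple d hne))).exists
    apply h2
    have h1 : Rat.castHom F (ev n d) = 0 := h1
    simpa using h1
  obtain ⟨ψ, hψ⟩ := aux_lift (E := E) (c.comp evp) hinj
  obtain ⟨d, hd, hP⟩ := IsLocalization.integerNormalization_spec (nonZeroDivisors D) (minpoly E y)
  set P := IsLocalization.integerNormalization (nonZeroDivisors D) (minpoly E y) with hPdef
  have hd0 : algebraMap D E d ≠ 0 := by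
    intro h
    exact nonZeroDivisors.ne_zero hd ((IsFractionRing.to_map_eq_zero_iff (K := E)).mp h)
  have hP' : P.map (algebraMap D E) = C (algebraMap D E d) * minpoly E y := by
    rw [hP, ← IsScalarTower.algebraMap_smul E d, smul_eq_C_mul]
  let f : ℝ[X] := (P.map (algebraMap D E)).map (algebraMap E ℝ)
  have hf0 : f.eval y = 0 := by
    simp only [f, hP', Polynomial.map_mul, eval_mul]
    rw [eval_map_algebraMap, eval_map_algebraMap, minpoly.aeval, mul_zero]
  have hf1 : f.derivative.eval y ≠ 0 := by
    simp only [f, hP', Polynomial.map_mul, Polynomial.map_C, derivative_C_mul, eval_mul, eval_C, derivative_map]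
    rw [eval_map_algebraMap]
    refine mul_ne_zero (by simpa using hd0) ?_
    have : CharZero E := (algebraMap E ℝ).charZero
    exact (minpoly.irreducible hy).separable.aeval_derivative_ne_zero (minpoly.aeval E y)
  obtain ⟨a, b, hab, hneg⟩ := aux_simple_root f y hf0 hf1
  have hev : ∀ x : ℝ, Tendsto (fun n => ((P.map (ev n)).map (algebraMap ℚ ℝ)).eval x) atTop (𝓝 (f.eval x)) := by
    intro x
    have h1 : ∀ n, ((P.map (ev n)).map (algebraMap ℚ ℝ)).eval x
        = P.sum fun i e => ((ev n e : ℚ) : ℝ) * x ^ i := by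
      intro n
      rw [eval_map, eval₂_map, eval₂_eq_sum]; rfl
    have h2 : f.eval x = P.sum fun i e => algebraMap E ℝ (algebraMap D E e) * x ^ i := by
      simp only [f]; rw [eval_map, eval₂_map, eval₂_eq_sum]; rfl
    rw [h2]; simp only [h1, Polynomial.sum]
    exact tendsto_finsetSum _ fun i _ => (conv _).mul_const _
  have hroot : ∀ᶠ n in atTop, ∃ z : F, eval₂ ((Rat.castHom F).comp (ev n)) z P = 0 := by
    filter_upwards [((hev a).mul (hev b)).eventually (gt_mem_nhds hneg)] with n hn
    obtain ⟨z, hz⟩ := aux_ivt _ a b hab hn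
    have hne : P.map (ev n) ≠ 0 := by
      intro h; rw [h] at hn; simp at hn
    have hz' : aeval z (P.map (ev n)) = 0 := by rwa [eval_map_algebraMap] at hz
    have hal : IsAlgebraic ℚ z := ⟨_, hne, hz'⟩
    obtain ⟨x, rfl⟩ := hi z hal
    refine ⟨x, ?_⟩
    apply i.injective
    rw [hom_eval₂, map_zero, ← RingHom.comp_assoc, ← eval₂_map]
    rw [aeval_def] at hz'
    have hQ : i.comp (Rat.castHom F) = algebraMap ℚ ℝ := Subsingleton.elim _ _
    rw [hQ]
    exact hz'
  choose! z hz using fun n (h : ∃ z : F, eval₂ ((Rat.castHom F).comp (ev n)) z P = 0) => h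
  have hzP : eval₂ ψ (c z) (P.map (algebraMap D E)) = 0 := by
    rw [eval₂_map, hψ, ← hom_eval₂]
    change ((eval₂ evp z P : ℕ → F) : HypF F) = ((0 : ℕ → F) : HypF F)
    apply Germ.coe_eq.mpr
    filter_upwards [hhy hroot] with n hn
    have := hom_eval₂ P evp (Pi.evalRingHom (fun _ => F) n) z
    exact this.trans (hz n hn)
  have hzp : eval₂ ψ (c z) (minpoly E y) = 0 := by
    rw [hP', eval₂_mul, eval₂_C] at hzP
    exact (mul_eq_zero.mp hzP).resolve_left (by simpa using hd0)
  exact ⟨(AdjoinRoot.lift ψ (c z) hzp).comp (adjoinRootEquivAdjoin E hy).symm.toRingHom⟩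

open MvPolynomial Filter in
theorem aux_spec {F : Type} [Field F] {L : Type} [Field L] (j : L →+* ℝ) (ψ : L →+* HypF F) (S : Set ℝ) (hS : S.Finite)
    (hSj : ∀ s ∈ S, ∃ l, j l = s) :
    ∃ A : Subring ℝ, S ⊆ A ∧ Nonempty (A →+* F) := by
  classical
  have : Finite S := hS
  choose l hl using fun s : S => hSj s s.2
  let θ : MvPolynomial S ℤ →+* ℝ := eval₂Hom (Int.castRingHom ℝ) (fun s => (s : ℝ))
  obtain ⟨T, hT⟩ := (inferInstance : IsNoetherian _ (MvPolynomial S ℤ)).noetherian (RingHom.ker θ)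
  have hrep : ∀ s : S, ∃ w : ℕ → F, (w : HypF F) = ψ (l s) := fun s =>
    Quotient.exists_rep (ψ (l s))
  choose w hw using hrep
  let c : (ℕ → F) →+* HypF F := Germ.coeRingHom _
  let ev : ℕ → MvPolynomial S ℤ →+* F := fun n => eval₂Hom (Int.castRingHom _) (fun s => w s n)
  let evp : MvPolynomial S ℤ →+* (ℕ → F) := RingHom.pi ev
  let γ : MvPolynomial S ℤ →+* L := eval₂Hom (Int.castRingHom L) l
  have e1 : j.comp γ = θ := by
    ext s <;> simp [γ, θ, hl]
  have e2 : ψ.comp γ = c.comp evp := by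
    apply MvPolynomial.ringHom_ext
    · intro r; simp
    · intro s
      have : evp (X s) = w s := by
        funext n
        exact (eval₂Hom_X' _ _ s)
      simp only [RingHom.comp_apply, this]
      have h2 : γ (X s) = l s := eval₂Hom_X' _ _ s
      rw [h2]
      exact (hw s).symm
  have hev : ∀ q ∈ T, ∀ᶠ n in ((hyperfilter ℕ : Ultrafilter ℕ) : Filter ℕ), ev n q = 0 := by
    intro q hq
    have hq : q ∈ RingHom.ker θ := hT ▸ Submodule.subset_span hq
    have hq : θ q = 0 := hq
    rw [← e1] at hq
    have hq : γ q = 0 := by simpa using hq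
    have : c (evp q) = 0 := by
      rw [← RingHom.comp_apply, ← e2, RingHom.comp_apply, hq, map_zero]
    have : ((evp q : ℕ → F) : HypF F) = ((0 : ℕ → F) : HypF F) := this
    exact Germ.coe_eq.mp this
  obtain ⟨n, hn⟩ := ((Finset.eventually_all T).mpr hev).exists
  refine ⟨θ.range, ?_, ⟨?_⟩⟩
  · intro s hs
    exact ⟨X ⟨s, hs⟩, by simp [θ]⟩
  · have hker : RingHom.ker θ.rangeRestrict ≤ RingHom.ker (ev n) := by
      rw [RingHom.ker_rangeRestrict, ← hT]
      exact Submodule.span_le.mpr hn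
    exact RingHom.liftOfSurjective θ.rangeRestrict θ.rangeRestrict_surjective ⟨ev n, hker⟩

open MvPolynomial Filter Topology IntermediateField IntermediateField.algebraAdjoinAdjoin in
theorem artin_lang (S : Set ℝ) (hS : S.Finite) :
    ∃ A : Subring ℝ, S ⊆ A ∧ Nonempty (A →+* RealAlg) := by
  classical
  obtain ⟨ι, x, hx⟩ := exists_isTranscendenceBasis' ℚ ℝ
  have hseq : ∀ i, ∃ u : ℕ → ℚ, Tendsto (fun n => (u n : ℝ)) atTop (𝓝 (x i)) := by
    intro i
    obtain ⟨u, hu, hu2⟩ := Real.exists_seq_rat_strictMono_tendsto (x i)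
    exact ⟨u, hu2.2⟩
  choose u hu using hseq
  let E := IntermediateField.adjoin ℚ (Set.range x)
  let D := Algebra.adjoin ℚ (Set.range x)
  have : Algebra.IsAlgebraic E ℝ := hx.isAlgebraic_field
  let ev : ℕ → D →+* ℚ := fun n =>
    (aeval (fun i => u i n) : MvPolynomial ι ℚ →ₐ[ℚ] ℚ).toRingHom.comp hx.1.aevalEquiv.symm.toRingHom
  have conv : ∀ d, Tendsto (fun n => ((ev n d : ℚ) : ℝ)) atTop (𝓝 (algebraMap E ℝ (algebraMap D E d))) := by
    intro d
    obtain ⟨q, rfl⟩ := hx.1.aevalEquiv.surjective d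
    have h1 : algebraMap E ℝ (algebraMap D E (hx.1.aevalEquiv q)) = aeval x q := by
      exact hx.1.algebraMap_aevalEquiv q
    have h2 : ∀ n, ((ev n (hx.1.aevalEquiv q) : ℚ) : ℝ) = eval (fun i => (u i n : ℝ)) (map (algebraMap ℚ ℝ) q) := by
      intro n
      have : ev n (hx.1.aevalEquiv q) = aeval (fun i => u i n) q := by
        simp [ev]
      rw [this, eval_map]
      have := hom_eval₂ q (algebraMap ℚ ℚ) (algebraMap ℚ ℝ) (fun i => u i n)
      exact this
    rw [h1]; simp only [h2]
    have h3 : aeval x q = eval x (map (algebraMap ℚ ℝ) q) := by rw [eval_map]; rfl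
    rw [h3]
    exact ((MvPolynomial.continuous_eval (map (algebraMap ℚ ℝ) q)).tendsto x).comp (tendsto_pi_nhds.mpr hu)
  have : Finite S := hS
  have : FiniteDimensional E (IntermediateField.adjoin E S) :=
    IntermediateField.finiteDimensional_adjoin fun s _ => Algebra.IsIntegral.isIntegral s
  obtain ⟨y, hy⟩ := Field.exists_primitive_element E (IntermediateField.adjoin E S)
  have hyi : IsIntegral E (y : ℝ) := Algebra.IsIntegral.isIntegral _
  obtain ⟨ψ⟩ := aux_hom (algebraMap RealAlg ℝ)
    (fun z hz => ⟨⟨z, mem_algebraicClosure_iff.mpr hz⟩, rfl⟩) ev conv (y : ℝ) hyi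
  refine aux_spec (algebraMap E⟮(y : ℝ)⟯ ℝ) ψ S hS ?_
  intro s hs
  have hs1 : s ∈ IntermediateField.adjoin E S := IntermediateField.subset_adjoin _ _ hs
  have : IntermediateField.adjoin E S = E⟮(y : ℝ)⟯ := by
    have := congrArg IntermediateField.lift hy
    simpa [IntermediateField.lift_adjoin] using this.symm
  exact ⟨⟨s, this ▸ hs1⟩, rfl⟩

open Matrix in
structure PRep {K : Type} [Field K] {m : ℕ} (P : Matrix (Fin m) (Fin m) K)
    (U : Submodule K (Fin m → K)) : Prop where
  symm : Pᵀ = P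
  idem : P * P = P
  mem : ∀ x, x ∈ U ↔ P *ᵥ x = x

open Matrix in
theorem mem_orthF {K : Type} [Field K] {m : ℕ} (U : Submodule K (Fin m → K)) (y : Fin m → K) :
    y ∈ orthF U ↔ ∀ x ∈ U, x ⬝ᵥ y = 0 := Iff.rfl

open Matrix in
theorem PRep.compl {K : Type} [Field K] {m : ℕ} {P : Matrix (Fin m) (Fin m) K}
    {U : Submodule K (Fin m → K)} (h : PRep P U) : PRep (1 - P) (orthF U) := by
  refine ⟨by simp [h.symm], by simp [mul_sub, sub_mul, h.idem], fun x => ?_⟩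
  rw [mem_orthF, sub_mulVec, one_mulVec, sub_eq_self]
  constructor
  · intro hx
    apply dotProduct_eq_zero_iff.mp
    intro z
    rw [dotProduct_comm, dotProduct_mulVec, ← mulVec_transpose, h.symm]
    apply hx
    rw [h.mem, mulVec_mulVec, h.idem]
  · intro hx y hy
    rw [h.mem] at hy
    rw [← hy, ← h.symm, mulVec_transpose, ← dotProduct_mulVec, hx, dotProduct_zero]

open Matrix in
theorem PRep.inf {K : Type} [Field K] {m : ℕ} {P Q R T : Matrix (Fin m) (Fin m) K}
    {U W : Submodule K (Fin m → K)} (hP : PRep P U) (hQ : PRep Q W) (h1 : Rᵀ = R) (h2 : R * R = R)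
    (h3 : P * R = R) (h4 : Q * R = R) (h5 : T * (R + (1 - P) + (1 - Q)) = 1) : PRep R (U ⊓ W) := by
  refine ⟨h1, h2, fun x => ?_⟩
  rw [Submodule.mem_inf, hP.mem, hQ.mem]
  constructor
  · rintro ⟨hx, hy⟩
    have e1 : (R + (1 - P) + (1 - Q)) *ᵥ x = R *ᵥ x := by
      simp [add_mulVec, sub_mulVec, hx, hy]
    have e2 : (R + (1 - P) + (1 - Q)) *ᵥ (R *ᵥ x) = R *ᵥ x := by
      rw [mulVec_mulVec, add_mul, add_mul, sub_mul, sub_mul, one_mul, h2, h3, h4, sub_self, add_zero, add_zero]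
    have e3 := congrArg (T *ᵥ ·) (e1.trans e2.symm)
    simp only [mulVec_mulVec, ← mul_assoc] at e3
    rw [h5, one_mulVec, one_mul] at e3
    exact e3.symm
  · intro hx
    rw [← hx, mulVec_mulVec, mulVec_mulVec, h3, h4]
    exact ⟨rfl, rfl⟩

open Matrix in
theorem aux_aniso {K : Type} [Field K] (i : K →+* ℝ) {m : ℕ} (x y z : Fin m → K)
    (h : x ⬝ᵥ x + y ⬝ᵥ y + z ⬝ᵥ z = 0) : x = 0 ∧ y = 0 ∧ z = 0 := by
  have key : ∀ x : Fin m → K, 0 ≤ i (x ⬝ᵥ x) ∧ (i (x ⬝ᵥ x) = 0 → x = 0) := by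
    intro x
    have e : i (x ⬝ᵥ x) = ∑ k, i (x k) * i (x k) := by simp [dotProduct]
    rw [e]
    refine ⟨Finset.sum_nonneg fun k _ => mul_self_nonneg _, fun h0 => ?_⟩
    funext k
    have := (Finset.sum_eq_zero_iff_of_nonneg fun k _ => mul_self_nonneg (i (x k))).mp h0 k
      (Finset.mem_univ _)
    simpa using this
  have h' := congrArg i h
  simp only [map_add, map_zero] at h'
  have h1 := key x
  have h2 := key y
  have h3 := key z
  exact ⟨h1.2 (by linarith), h2.2 (by linarith), h3.2 (by linarith)⟩

open Matrix in
theorem PRep.exists {K : Type} [Field K] (i : K →+* ℝ) {m : ℕ} (U : Submodule K (Fin m → K)) :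
    ∃ P, PRep P U := by
  classical
  let B : LinearMap.BilinForm K (Fin m → K) := dotProductBilin K K
  have hB : ∀ x y, B x y = x ⬝ᵥ y := fun x y => rfl
  have hrefl : B.IsRefl := fun x y h => by rw [hB, dotProduct_comm]; exact h
  have hdis : Disjoint U (B.orthogonal U) := by
    rw [Submodule.disjoint_def]
    intro x hx hx2
    have h0 : x ⬝ᵥ x = 0 := hx2 x hx
    exact (aux_aniso i x 0 0 (by simp [h0])).1
  have hc : IsCompl U (B.orthogonal U) :=
    LinearMap.BilinForm.isCompl_orthogonal_of_restrict_nondegenerate hrefl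
      (B.nondegenerate_restrict_of_disjoint_orthogonal hrefl hdis)
  let p : (Fin m → K) →ₗ[K] (Fin m → K) := U.subtype ∘ₗ Submodule.projectionOnto U _ hc
  have hpU : ∀ x, p x ∈ U := fun x => Subtype.mem _
  have hpid : ∀ x ∈ U, p x = x := fun x hx => by
    have := Submodule.projectionOnto_apply_left hc ⟨x, hx⟩
    exact congrArg Subtype.val this
  have hpo : ∀ x, x - p x ∈ B.orthogonal U := fun x => by
    rw [← Submodule.ker_projectionOnto hc, LinearMap.mem_ker]
    apply Subtype.ext
    change p (x - p x) = 0
    rw [map_sub, hpid _ (hpU x), sub_self]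
  have hort : ∀ x y, x ⬝ᵥ p y = p x ⬝ᵥ p y := fun x y => by
    have h1 : p y ⬝ᵥ (x - p x) = 0 := hpo x _ (hpU y)
    rw [dotProduct_sub, sub_eq_zero, dotProduct_comm, dotProduct_comm (p y)] at h1
    exact h1
  have hm : ∀ x, LinearMap.toMatrix' p *ᵥ x = p x := fun x => LinearMap.toMatrix'_mulVec p x
  refine ⟨LinearMap.toMatrix' p, ?_, ?_, fun x => ?_⟩
  · ext a b
    have e : ∀ a b, LinearMap.toMatrix' p a b = Pi.single a 1 ⬝ᵥ p (Pi.single b 1) := by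
      intro a b
      rw [single_one_dotProduct, ← hm, mulVec_single_one]; rfl
    rw [transpose_apply, e, e, hort, dotProduct_comm, ← hort]
  · rw [← LinearMap.toMatrix'_comp]
    congr 1
    apply LinearMap.ext
    intro z
    exact hpid _ (hpU z)
  · rw [hm]
    exact ⟨hpid x, fun h => h ▸ hpU x⟩

open Matrix in
theorem PRep.unique {K : Type} [Field K] {m : ℕ} {P Q : Matrix (Fin m) (Fin m) K}
    {U : Submodule K (Fin m → K)} (hP : PRep P U) (hQ : PRep Q U) : P = Q := by
  have key : ∀ {P Q : Matrix (Fin m) (Fin m) K}, PRep P U → PRep Q U → P * Q = Q := by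
    intro P Q hP hQ
    apply Matrix.ext_of_mulVec_single; intro k
    rw [← mulVec_mulVec, ← hP.mem, hQ.mem, mulVec_mulVec, hQ.idem]
  have h1 := key hP hQ
  have h2 := congrArg transpose (key hQ hP)
  rw [transpose_mul, hP.symm, hQ.symm] at h2
  rw [← h2, h1]

theorem orth_orth {K : Type} [Field K] (i : K →+* ℝ) {m : ℕ} (U : Submodule K (Fin m → K)) :
    orthF (orthF U) = U := by
  obtain ⟨P, hP⟩ := PRep.exists i U
  ext x
  rw [hP.compl.compl.mem, hP.mem, sub_sub_cancel]

theorem sup_orth {K : Type} [Field K] (i : K →+* ℝ) {m : ℕ} (U W : Submodule K (Fin m → K)) :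
    U ⊔ W = orthF (orthF U ⊓ orthF W) := by
  rw [← orth_orth i (U ⊔ W)]
  congr 1
  ext y
  simp only [Submodule.mem_inf, mem_orthF]
  constructor
  · intro h
    exact ⟨fun x hx => h x (Submodule.mem_sup_left hx), fun x hx => h x (Submodule.mem_sup_right hx)⟩
  · rintro ⟨h1, h2⟩ x hx
    obtain ⟨a, ha, b, hb, rfl⟩ := Submodule.mem_sup.mp hx
    rw [add_dotProduct, h1 a ha, h2 b hb, add_zero]

open Matrix in
theorem inf_cert {K : Type} [Field K] (i : K →+* ℝ) {m : ℕ} {P Q R : Matrix (Fin m) (Fin m) K}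
    {U W : Submodule K (Fin m → K)} (hP : PRep P U) (hQ : PRep Q W) (hR : PRep R (U ⊓ W)) :
    P * R = R ∧ Q * R = R ∧ ∃ T, T * (R + (1 - P) + (1 - Q)) = 1 := by
  have hRm : ∀ x, R *ᵥ x ∈ U ⊓ W := fun x => by rw [hR.mem, mulVec_mulVec, hR.idem]
  refine ⟨?_, ?_, ?_⟩
  · apply Matrix.ext_of_mulVec_single; intro k
    rw [← mulVec_mulVec, (hP.mem _).mp (hRm _).1]
  · apply Matrix.ext_of_mulVec_single; intro k
    rw [← mulVec_mulVec, (hQ.mem _).mp (hRm _).2]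
  · have hq : ∀ {X : Matrix (Fin m) (Fin m) K} {V : Submodule K (Fin m → K)}, PRep X V → ∀ x,
        x ⬝ᵥ (X *ᵥ x) = (X *ᵥ x) ⬝ᵥ (X *ᵥ x) := by
      intro X V h x
      conv_lhs => rw [← h.idem, ← mulVec_mulVec, dotProduct_mulVec, ← mulVec_transpose, h.symm]
    have hinj : Function.Injective (R + (1 - P) + (1 - Q)).mulVec := by
      apply (injective_iff_map_eq_zero (R + (1 - P) + (1 - Q)).mulVecLin).mpr
      intro x hx
      rw [mulVecLin_apply] at hx
      have h := congrArg (x ⬝ᵥ ·) hx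
      simp only [add_mulVec, dotProduct_add, dotProduct_zero, hq hR, hq hP.compl, hq hQ.compl] at h
      obtain ⟨h1, h2, h3⟩ := aux_aniso i _ _ _ h
      rw [sub_mulVec, one_mulVec, sub_eq_zero] at h2 h3
      rw [← (hR.mem x).mp ⟨(hP.mem x).mpr h2.symm, (hQ.mem x).mpr h3.symm⟩, h1]
    have hu := Matrix.mulVec_injective_iff_isUnit.mp hinj
    exact ⟨_, hu.val_inv_mul⟩

def Corr {K L : Type} [Field K] [Field L] {m : ℕ} {A : Subring K} (φ : A →+* L)
    (U : Submodule K (Fin m → K)) (V : Submodule L (Fin m → L)) : Prop :=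
  ∃ P : Matrix (Fin m) (Fin m) A, PRep (A.subtype.mapMatrix P) U ∧ PRep (φ.mapMatrix P) V

theorem Corr.compl {K L : Type} [Field K] [Field L] {m : ℕ} {A : Subring K} {φ : A →+* L}
    {U : Submodule K (Fin m → K)} {V : Submodule L (Fin m → L)} (h : Corr φ U V) :
    Corr φ (orthF U) (orthF V) := by
  obtain ⟨P, h1, h2⟩ := h
  exact ⟨1 - P, by simpa only [map_sub, map_one] using h1.compl,
    by simpa only [map_sub, map_one] using h2.compl⟩

def entries {K : Type} {m : ℕ} (P : Matrix (Fin m) (Fin m) K) : Set K :=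
  Set.range fun ij : Fin m × Fin m => P ij.1 ij.2

theorem lift_entries {K : Type} [Field K] {m : ℕ} {A : Subring K} (P : Matrix (Fin m) (Fin m) K)
    (h : entries P ⊆ A) : ∃ P' : Matrix (Fin m) (Fin m) A, A.subtype.mapMatrix P' = P :=
  ⟨fun a b => ⟨P a b, h ⟨(a, b), rfl⟩⟩, rfl⟩

theorem sub_inj {K : Type} [Field K] {m : ℕ} {A : Subring K} {P Q : Matrix (Fin m) (Fin m) A}
    (h : A.subtype.mapMatrix P = A.subtype.mapMatrix Q) : P = Q :=
  Matrix.map_injective A.subtype_injective h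

open Matrix in
theorem symm_tr {K L : Type} [Field K] [Field L] {m : ℕ} {A : Subring K} (φ : A →+* L)
    {P : Matrix (Fin m) (Fin m) A} {U : Submodule K (Fin m → K)}
    (h : PRep (A.subtype.mapMatrix P) U) :
    (φ.mapMatrix P)ᵀ = φ.mapMatrix P ∧ φ.mapMatrix P * φ.mapMatrix P = φ.mapMatrix P := by
  have h1 : Pᵀ = P := sub_inj h.symm
  have h2 : P * P = P := sub_inj (by rw [map_mul]; exact h.idem)
  refine ⟨?_, by rw [← map_mul, h2]⟩
  conv_rhs => rw [← h1]
  rfl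

theorem inf_corr {K L : Type} [Field K] [Field L] (i : K →+* ℝ) {m : ℕ}
    (U W : Submodule K (Fin m → K)) :
    ∃ S : Set K, S.Finite ∧ ∀ (A : Subring K) (φ : A →+* L), S ⊆ A → ∀ U' W', Corr φ U U' →
      Corr φ W W' → Corr φ (U ⊓ W) (U' ⊓ W') := by
  obtain ⟨P, hP⟩ := PRep.exists i U
  obtain ⟨Q, hQ⟩ := PRep.exists i W
  obtain ⟨R, hR⟩ := PRep.exists i (U ⊓ W)
  obtain ⟨h3, h4, T, hT⟩ := inf_cert i hP hQ hR
  refine ⟨entries R ∪ entries T, (Set.finite_range _).union (Set.finite_range _), ?_⟩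
  intro A φ hS U' W' hU hW
  obtain ⟨P', hP1, hP2⟩ := hU
  obtain ⟨Q', hQ1, hQ2⟩ := hW
  obtain rfl := hP1.unique hP
  obtain rfl := hQ1.unique hQ
  rw [Set.union_subset_iff] at hS
  obtain ⟨R', rfl⟩ := lift_entries R hS.1
  obtain ⟨T', rfl⟩ := lift_entries T hS.2
  have e3 : P' * R' = R' := sub_inj (by rw [map_mul]; exact h3)
  have e4 : Q' * R' = R' := sub_inj (by rw [map_mul]; exact h4)
  have e5 : T' * (R' + (1 - P') + (1 - Q')) = 1 :=
    sub_inj (by simpa only [map_mul, map_add, map_sub, map_one] using hT)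
  obtain ⟨e1, e2⟩ := symm_tr φ hR
  refine ⟨R', hR, hP2.inf hQ2 (T := φ.mapMatrix T') e1 e2 ?_ ?_ ?_⟩
  · rw [← map_mul, e3]
  · rw [← map_mul, e4]
  · have := congrArg φ.mapMatrix e5
    simpa only [map_mul, map_add, map_sub, map_one] using this

theorem term_corr {K L : Type} [Field K] [Field L] (i : K →+* ℝ) (i' : L →+* ℝ) {m : ℕ}
    (v : ℕ → Submodule K (Fin m → K)) (t : OLTerm) :
    ∃ S : Set K, S.Finite ∧ ∀ (A : Subring K) (φ : A →+* L), S ⊆ A →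
      ∀ w : ℕ → Submodule L (Fin m → L),
      (∀ k, (∃ P : Matrix (Fin m) (Fin m) A, PRep (A.subtype.mapMatrix P) (v k)) →
        Corr φ (v k) (w k)) → Corr φ (t.evalF v) (t.evalF w) := by
  induction t with
  | var k =>
    obtain ⟨P, hP⟩ := PRep.exists i (v k)
    refine ⟨entries P, Set.finite_range _, fun A φ hS w hw => hw k ?_⟩
    obtain ⟨P', rfl⟩ := lift_entries P hS
    exact ⟨P', hP⟩
  | zero =>
    refine ⟨∅, Set.finite_empty, fun A φ hS w hw => ⟨0, ?_, ?_⟩⟩ <;>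
    · rw [map_zero]
      exact ⟨by simp, by simp, fun x => by simp [OLTerm.evalF, eq_comm]⟩
  | one =>
    refine ⟨∅, Set.finite_empty, fun A φ hS w hw => ⟨1, ?_, ?_⟩⟩ <;>
    · rw [map_one]
      exact ⟨by simp, by simp, fun x => by simp [OLTerm.evalF]⟩
  | inf t s iht ihs =>
    obtain ⟨S1, f1, h1⟩ := iht
    obtain ⟨S2, f2, h2⟩ := ihs
    obtain ⟨S3, f3, h3⟩ := inf_corr (L := L) i (t.evalF v) (s.evalF v)
    refine ⟨S1 ∪ S2 ∪ S3, (f1.union f2).union f3, fun A φ hS w hw => ?_⟩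
    simp only [Set.union_subset_iff] at hS
    exact h3 A φ hS.2 _ _ (h1 A φ hS.1.1 w hw) (h2 A φ hS.1.2 w hw)
  | sup t s iht ihs =>
    obtain ⟨S1, f1, h1⟩ := iht
    obtain ⟨S2, f2, h2⟩ := ihs
    obtain ⟨S3, f3, h3⟩ := inf_corr (L := L) i (orthF (t.evalF v)) (orthF (s.evalF v))
    refine ⟨S1 ∪ S2 ∪ S3, (f1.union f2).union f3, fun A φ hS w hw => ?_⟩
    simp only [Set.union_subset_iff] at hS
    simp only [OLTerm.evalF]
    rw [sup_orth i, sup_orth i']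
    exact (h3 A φ hS.2 _ _ (h1 A φ hS.1.1 w hw).compl (h2 A φ hS.1.2 w hw).compl).compl
  | compl t iht =>
    obtain ⟨S1, f1, h1⟩ := iht
    exact ⟨S1, f1, fun A φ hS w hw => (h1 A φ hS w hw).compl⟩

open Matrix in
theorem transfer {K L : Type} [Field K] [Field L] (i : K →+* ℝ) (i' : L →+* ℝ) {m : ℕ}
    (hAL : ∀ S : Set K, S.Finite → ∃ A : Subring K, S ⊆ A ∧ Nonempty (A →+* L))
    (t : OLTerm) (hL : ∀ v : ℕ → Submodule L (Fin m → L), t.evalF v = ⊤)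
    (v : ℕ → Submodule K (Fin m → K)) : t.evalF v = ⊤ := by
  classical
  by_contra hne
  obtain ⟨S, hS, hc⟩ := term_corr (L := L) i i' v t
  obtain ⟨P, hP⟩ := PRep.exists i (t.evalF v)
  have hP1 : ∃ a b, P a b - (1 : Matrix (Fin m) (Fin m) K) a b ≠ 0 := by
    by_contra! h
    apply hne
    have : P = 1 := by ext a b; exact sub_eq_zero.mp (h a b)
    rw [eq_top_iff]; intro x _
    rw [hP.mem, this, one_mulVec]
  obtain ⟨a, b, hab⟩ := hP1
  obtain ⟨A, hSA, ⟨φ⟩⟩ := hAL (insert (P a b - (1 : Matrix (Fin m) (Fin m) K) a b)⁻¹ S) (hS.insert _)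
  rw [Set.insert_subset_iff] at hSA
  let w : ℕ → Submodule L (Fin m → L) := fun k =>
    if h : ∃ P : Matrix (Fin m) (Fin m) A, PRep (A.subtype.mapMatrix P) (v k)
      then LinearMap.ker ((φ.mapMatrix h.choose).mulVecLin - LinearMap.id) else ⊥
  obtain ⟨Q, hQ1, hQ2⟩ := hc A φ hSA.2 w (by
    intro k h
    refine ⟨h.choose, h.choose_spec, ?_⟩
    obtain ⟨e1, e2⟩ := symm_tr φ h.choose_spec
    refine ⟨e1, e2, fun x => ?_⟩
    simp only [w, dif_pos h, LinearMap.mem_ker, LinearMap.sub_apply, mulVecLin_apply,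
      LinearMap.id_apply, sub_eq_zero])
  rw [hL w] at hQ2
  have hφQ : φ.mapMatrix Q = 1 := by
    apply Matrix.ext_of_mulVec_single; intro k
    rw [(hQ2.mem _).mp trivial, one_mulVec]
  have hPQ : A.subtype.mapMatrix Q = P := PRep.unique hQ1 hP
  let c : A := Q a b - (1 : Matrix (Fin m) (Fin m) A) a b
  have hcK : (c : K) = P a b - (1 : Matrix (Fin m) (Fin m) K) a b := by
    rw [← hPQ, ← map_one A.subtype.mapMatrix]; rfl
  have hcφ : φ c = 0 := by
    have := congrFun (congrFun hφQ a) b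
    rw [← map_one φ.mapMatrix] at this
    simp only [c, map_sub]
    exact sub_eq_zero.mpr this
  have hmul : c * ⟨_, hSA.1⟩ = 1 := by
    apply Subtype.ext
    change (c : K) * _ = 1
    rw [hcK]; exact mul_inv_cancel₀ hab
  have := congrArg φ hmul
  rw [map_mul, hcφ, zero_mul, map_one] at this
  exact zero_ne_one this
/-- Let `𝔽` be the field of real algebraic numbers and `m` a positive integer.  An
ortholattice term is a tautology of the subspace ortholattice `L(𝔽^m)` if and only if
it is a tautology of the subspace ortholattice `L(ℝ^m)`. -/
theorem stmt14 (m : ℕ) (hm : 0 < m) (t : OLTerm) :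
    (∀ v : ℕ → Submodule RealAlg (Fin m → RealAlg), t.evalF v = ⊤) ↔
    (∀ v : ℕ → Submodule ℝ (Fin m → ℝ), t.evalF v = ⊤) := by
  constructor
  · intro h v
    exact transfer (RingHom.id ℝ) (algebraMap RealAlg ℝ) artin_lang t h v
  · intro h v
    exact transfer (algebraMap RealAlg ℝ) (RingHom.id ℝ)
      (fun S _ => ⟨⊤, Set.subset_univ _, ⟨(algebraMap RealAlg ℝ).comp (Subring.subtype ⊤)⟩⟩) t h v
end
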